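/- Let p be a prime, let G be a non-abelian group of order p³, and let S ⊆ G with S = S^{-1}, 1 ∉ S and S generating G. Then the Hamilton compression of the Cayley graph Cay(G,S) satisfies κ(Cay(G,S)) ≥ p; that is, Cay(G,S) has a Hamilton cycle admitting a rotational symmetry of order p. -/

import Mathlib

open SimpleGraph

/-- The automorphism group of a simple graph, as a subgroup of the permutation group
of the vertex set. -/
def autSubgroup {V : Type*} (X : SimpleGraph V) : Subgroup (Equiv.Perm V) where
  carrier := {π | ∀ u v : V, X.Adj (π u) (π v) ↔ X.Adj u v}
  one_mem' := fun u v => Iff.rfl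
  mul_mem' := fun {a b} ha hb u v => (ha (b u) (b v)).trans (hb u v)
  inv_mem' := fun {a} ha u v => by simpa using (ha (a⁻¹ u) (a⁻¹ v)).symm

/-- `c` is a Hamilton cycle of `X`, presented as a cyclic enumeration
`v_0, v_1, …, v_{N-1}` of the vertices (indices modulo `N = |V|`) with consecutive
vertices adjacent. -/
def IsHamCycle {V : Type*} [Fintype V] (X : SimpleGraph V)
    (c : ZMod (Fintype.card V) → V) : Prop :=
  Function.Bijective c ∧ ∀ i, X.Adj (c i) (c (i + 1))

/-- The Hamilton cycle `c` of `X` is `k`-symmetric: `k ∣ N` and some automorphism `α`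
of `X` satisfies `α (v_i) = v_{i + N/k}` for all `i`. -/
def IsSymmHamCycle {V : Type*} [Fintype V] (X : SimpleGraph V)
    (c : ZMod (Fintype.card V) → V) (k : ℕ) : Prop :=
  k ∣ Fintype.card V ∧
    ∃ α ∈ autSubgroup X, ∀ i, α (c i) = c (i + (Fintype.card V / k : ℕ))

/-- The Hamilton compression `κ(X)` of a graph `X`: the largest `k` such that some
Hamilton cycle of `X` is `k`-symmetric (and `0` if `X` has no Hamilton cycle). -/
noncomputable def hamiltonCompression {V : Type*} [Fintype V] (X : SimpleGraph V) : ℕ :=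
  sSup {k | ∃ c, IsHamCycle X c ∧ IsSymmHamCycle X c k}

/-- The metacirculant graph `X(m,n;r)` on vertex set `ℤ/m × ℤ/n`: vertex `(i,j)` is
adjacent to `(i, j ± r^i)` and `(i ± 1, j)`. -/
def metaGraph (m n : ℕ) (r : (ZMod n)ˣ) : SimpleGraph (ZMod m × ZMod n) :=
  SimpleGraph.fromRel (fun u v =>
    (u.1 = v.1 ∧ v.2 = u.2 + (r : ZMod n) ^ u.1.val) ∨ (u.2 = v.2 ∧ v.1 = u.1 + 1))

/-- The Cayley graph of a group `G` with connection set `S` (for symmetric `S`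
with `1 ∉ S` this is the usual Cayley graph: `g ~ h` iff `g⁻¹ * h ∈ S`). -/
def cayleyGraph {G : Type*} [Group G] (S : Set G) : SimpleGraph G :=
  SimpleGraph.fromRel (fun g h => g⁻¹ * h ∈ S)


/-- The list of vertices visited by the walk with steps `L` starting at `q`
(the endpoint is not included). -/
def pre {Q : Type*} [Group Q] : List Q → Q → List Q
  | [], _ => []
  | s :: L, q => q :: pre L (q * s)

lemma pre_append {Q : Type*} [Group Q] (L M : List Q) (q : Q) :
    pre (L ++ M) q = pre L q ++ pre M (q * L.prod) := by
  induction L generalizing q with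
  | nil => simp [pre]
  | cons s L ih => simp [pre, ih, mul_assoc]

lemma pre_map {G Q : Type*} [Group G] [Group Q] (π : G →* Q) (L : List G) (q : G) :
    pre (L.map π) (π q) = (pre L q).map π := by
  induction L generalizing q with
  | nil => simp [pre]
  | cons s L ih => simp only [List.map_cons, pre, ← map_mul, ih]

lemma mem_pre {Q : Type*} [Group Q] (L : List Q) (q v : Q) (h : v ∈ pre L q) :
    ∃ j < L.length, v = q * (L.take j).prod := by
  induction L generalizing q with
  | nil => simp [pre] at h
  | cons s L ih =>
    simp only [pre, List.mem_cons] at h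
    rcases h with rfl | h
    · exact ⟨0, by simp, by simp⟩
    · obtain ⟨j, hj, rfl⟩ := ih _ h
      exact ⟨j + 1, by simpa using hj, by simp [mul_assoc]⟩

/-- Vertices of the infinite periodic walk with steps `L`. -/
def walkF {G : Type*} [Group G] (L : List G) : ℕ → G
  | 0 => 1
  | m + 1 => walkF L m * (L.getD (m % L.length) 1)

lemma walkF_take {G : Type*} [Group G] (L : List G) (j : ℕ) (hj : j ≤ L.length) :
    walkF L j = (L.take j).prod := by
  induction j with
  | zero => simp [walkF]
  | succ j ih =>
    have hlt : j < L.length := hj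
    rw [walkF, ih (by omega), Nat.mod_eq_of_lt hlt, List.prod_take_succ L j hlt]
    simp [hlt]

lemma walkF_add {G : Type*} [Group G] (L : List G) (m : ℕ) :
    walkF L (m + L.length) = L.prod * walkF L m := by
  induction m with
  | zero => simp [walkF_take, walkF]
  | succ m ih =>
    rw [show m + 1 + L.length = (m + L.length) + 1 by omega, walkF, walkF, ih]
    simp [mul_assoc]

lemma walkF_add_mul {G : Type*} [Group G] (L : List G) (m k : ℕ) :
    walkF L (m + k * L.length) = L.prod ^ k * walkF L m := by
  induction k with
  | zero => simp
  | succ k ih =>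
    rw [show m + (k+1) * L.length = (m + k * L.length) + L.length by ring, walkF_add, ih,
      pow_succ', mul_assoc]

lemma core {G : Type*} [Group G] [Fintype G] (p : ℕ) (hp : p.Prime)
    (hcard : Fintype.card G = p ^ 3)
    (S : Set G) (h1 : (1 : G) ∉ S) (L : List G) (hL : ∀ s ∈ L, s ∈ S)
    (hlen : L.length = p ^ 2) (hg : L.prod ^ p = 1)
    (hcov : ∀ x : G, ∃ k : ℕ, ∃ v ∈ pre L 1, x = L.prod ^ k * v) :
    p ≤ hamiltonCompression (cayleyGraph S) := by
  have hp0 := hp.pos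
  have hlen0 : 0 < L.length := by rw [hlen]; positivity
  have hNpos : 0 < Fintype.card G := Fintype.card_pos
  have : NeZero (Fintype.card G) := ⟨hNpos.ne'⟩
  have hN : Fintype.card G = p * L.length := by rw [hcard, hlen]; ring
  set N := Fintype.card G with hNdef
  have hper : ∀ m, walkF L (m % N) = walkF L m := by
    intro m
    conv_rhs => rw [← Nat.mod_add_div m N]
    rw [show m % N + N * (m / N) = m % N + (p * (m / N)) * L.length by
      conv_lhs => rw [hN]
      conv_rhs => rw [hN]
      ring, walkF_add_mul, pow_mul, hg]
    simp
  let c : ZMod N → G := fun i => walkF L i.val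
  have hc : ∀ m : ℕ, c (m : ZMod N) = walkF L m := by
    intro m
    simp only [c, ZMod.val_natCast, hper]
  have hci : ∀ (i : ZMod N) (m : ℕ), c (i + m) = walkF L (i.val + m) := by
    intro i m
    rw [← hc, Nat.cast_add, ZMod.natCast_zmod_val]
  have hsurj : Function.Surjective c := by
    intro x
    obtain ⟨k, v, hv, rfl⟩ := hcov x
    obtain ⟨j, hj, rfl⟩ := mem_pre _ _ _ hv
    refine ⟨((j + k * L.length : ℕ) : ZMod N), ?_⟩
    rw [hc, walkF_add_mul, walkF_take _ _ hj.le, one_mul]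
  have hbij : Function.Bijective c :=
    (Fintype.bijective_iff_surjective_and_card c).2 ⟨hsurj, by rw [ZMod.card]⟩
  have hham : IsHamCycle (cayleyGraph S) c := by
    refine ⟨hbij, fun i => ?_⟩
    have h2 : c (i + 1) = c i * (L.getD (i.val % L.length) 1) := by
      have := hci i 1
      rw [Nat.cast_one] at this
      rw [this, walkF]
    have h3 : L.getD (i.val % L.length) 1 ∈ S := by
      apply hL
      have hlt := Nat.mod_lt i.val hlen0
      simp [hlt]
    rw [h2, cayleyGraph, SimpleGraph.fromRel_adj]
    refine ⟨fun h => ?_, Or.inl (by simpa using h3)⟩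
    rw [left_eq_mul] at h
    rw [h] at h3
    exact h1 h3
  have hdiv : N / p = L.length := by rw [hN]; exact Nat.mul_div_cancel_left _ hp0
  have hsym : IsSymmHamCycle (cayleyGraph S) c p := by
    refine ⟨⟨_, hN⟩, Equiv.mulLeft L.prod, ?_, ?_⟩
    · intro u v
      simp [cayleyGraph, SimpleGraph.fromRel_adj, mul_assoc]
    · intro i
      change _ = c (i + ((N / p : ℕ) : ZMod N))
      rw [hci, hdiv, walkF_add]
      rfl
  apply le_csSup
  · refine ⟨N, ?_⟩
    rintro k ⟨_, _, hk, _⟩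
    exact Nat.le_of_dvd hNpos hk
  · exact ⟨c, hham, hsym⟩

/-- The walk with steps `L` covers `n` consecutive rows (cosets of `⟨A⟩`). -/
def Rows {Q : Type*} [CommGroup Q] (A B : Q) (L : List Q) (n : ℕ) : Prop :=
  (∃ e : ℤ, L.prod = B ^ n * A ^ e) ∧
    ∀ q : Q, ∀ j < n, ∀ k : ℤ, q * B ^ j * A ^ k ∈ pre L q

lemma Rows.append {Q : Type*} [CommGroup Q] {A B : Q} {L M : List Q} {n m : ℕ}
    (h : Rows A B L n) (h' : Rows A B M m) : Rows A B (L ++ M) (n + m) := by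
  obtain ⟨⟨e, he⟩, hL⟩ := h
  obtain ⟨⟨e', he'⟩, hM⟩ := h'
  refine ⟨⟨e + e', ?_⟩, ?_⟩
  · rw [List.prod_append, he, he', pow_add, zpow_add]
    exact mul_mul_mul_comm _ _ _ _
  · intro q j hj k
    rw [pre_append, List.mem_append]
    by_cases hjn : j < n
    · exact Or.inl (hL q j hjn k)
    · right
      have := hM (q * L.prod) (j - n) (by omega) (k - e)
      convert this using 1
      obtain ⟨i, rfl⟩ : ∃ i, j = n + i := ⟨j - n, by omega⟩
      rw [he, Nat.add_sub_cancel_left, pow_add, zpow_sub]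
      simp only [mul_assoc]
      congr 2
      rw [mul_left_comm, mul_comm (A ^ k), mul_inv_cancel_left]

lemma Rows.flatten {Q : Type*} [CommGroup Q] {A B : Q} (Ls : List (List Q))
    (h : ∀ L ∈ Ls, Rows A B L 1) : Rows A B Ls.flatten Ls.length := by
  induction Ls with
  | nil => exact ⟨⟨0, by simp⟩, by simp⟩
  | cons L Ls ih =>
    rw [List.flatten_cons, List.length_cons, add_comm]
    exact (h L (by simp)).append (ih fun M hM => h M (by simp [hM]))

lemma zpow_red {Q : Type*} [Group Q] (A : Q) (p : ℕ) (hp : 0 < p) (hA : A ^ p = 1) (k : ℤ) :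
    ∃ i < p, A ^ k = A ^ i := by
  refine ⟨(k % p).toNat, ?_, ?_⟩
  · have := Int.emod_lt_of_pos k (show (0:ℤ) < p by exact_mod_cast hp)
    have := Int.emod_nonneg k (show (p:ℤ) ≠ 0 by omega)
    omega
  · rw [← zpow_natCast, Int.toNat_of_nonneg (Int.emod_nonneg k (by omega))]
    conv_lhs => rw [← Int.emod_add_mul_ediv k p]
    rw [zpow_add, zpow_mul, zpow_natCast, hA, one_zpow, mul_one]

lemma mem_pre_replicate {Q : Type*} [Group Q] (s q : Q) (n i : ℕ) (hi : i < n) :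
    q * s ^ i ∈ pre (List.replicate n s) q := by
  induction n generalizing q i with
  | zero => omega
  | succ n ih =>
    rw [List.replicate_succ, pre]
    cases i with
    | zero => simp
    | succ i =>
      rw [List.mem_cons]
      right
      have := ih (q * s) i (by omega)
      rwa [mul_assoc, ← pow_succ'] at this

/-- Single-row block. -/
def blockR {G : Type*} [Group G] (p : ℕ) (b s : G) : List G := List.replicate (p - 1) s ++ [b]

lemma Rows.blockR {Q : Type*} [CommGroup Q] {A B : Q} {p : ℕ} (hp : 0 < p) (hA : A ^ p = 1)
    (s : Q) (hs : s = A ∨ s = A⁻¹) : Rows A B (blockR p B s) 1 := by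
  have hsz : ∃ δ : ℤ, s = A ^ δ ∧ A = s ^ δ := by
    rcases hs with rfl | rfl
    · exact ⟨1, by simp, by simp⟩
    · exact ⟨-1, by simp, by simp⟩
  obtain ⟨δ, hδ, hδ'⟩ := hsz
  have hsp : s ^ p = 1 := by rcases hs with rfl | rfl <;> simp [hA]
  refine ⟨⟨δ * (p - 1 : ℕ), ?_⟩, ?_⟩
  · simp only [_root_.blockR, List.prod_append, List.prod_replicate, List.prod_singleton, pow_one]
    rw [zpow_mul, ← hδ, zpow_natCast, mul_comm]
  · intro q j hj k
    obtain rfl : j = 0 := by omega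
    obtain ⟨i, hi, hik⟩ := zpow_red s p hp hsp (δ * k)
    rw [pow_zero, mul_one]
    have : A ^ k = s ^ i := by rw [← hik, zpow_mul, ← hδ']
    rw [this, _root_.blockR, pre_append, List.mem_append]
    by_cases hi' : i < p - 1
    · exact Or.inl (mem_pre_replicate _ _ _ _ hi')
    · obtain rfl : i = p - 1 := by omega
      right
      simp [pre]

/-- Zigzag part of the double-row block. -/
def zig {G : Type*} [Group G] (a b : G) : ℕ → List G
  | 0 => [b, b]
  | m + 1 => [b, a, b⁻¹, a] ++ zig a b m

lemma zig_mem {Q : Type*} [CommGroup Q] (A B q : Q) (m i j : ℕ) (hi : i ≤ 2 * m) (hj : j < 2) :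
    q * B ^ j * A ^ i ∈ pre (zig A B m) q := by
  induction m generalizing q i with
  | zero =>
    obtain rfl : i = 0 := by omega
    interval_cases j <;> simp [zig, pre]
  | succ m ih =>
    rw [zig, pre_append, List.mem_append]
    rcases lt_or_ge i 2 with h | h
    · left
      have h3 : q * A = q * B * A * B⁻¹ := by
        rw [mul_right_comm q B A, mul_inv_cancel_right]
      interval_cases i <;> interval_cases j <;> simp [pre, ← h3]
    · right
      obtain ⟨i, rfl⟩ : ∃ i', i = i' + 2 := ⟨i - 2, by omega⟩
      have := ih (q * [B, A, B⁻¹, A].prod) i (by omega)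
      convert this using 1
      have h2 : [B, A, B⁻¹, A].prod = A ^ 2 := by
        simp only [List.prod_cons, List.prod_nil, mul_one, sq]
        rw [mul_left_comm A, mul_inv_cancel_left]
      rw [h2, pow_add, mul_comm (A ^ i)]
      simp only [mul_assoc]
      rw [mul_left_comm (B ^ j)]

lemma zig_prod {Q : Type*} [CommGroup Q] (A B : Q) (m : ℕ) :
    (zig A B m).prod = B ^ 2 * A ^ (2 * m) := by
  induction m with
  | zero => simp [zig, sq]
  | succ m ih =>
    have h2 : [B, A, B⁻¹, A].prod = A ^ 2 := by
      simp only [List.prod_cons, List.prod_nil, mul_one, sq]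
      rw [mul_left_comm A, mul_inv_cancel_left]
    rw [zig, List.prod_append, h2, ih, show 2 * (m + 1) = 2 + 2 * m by ring, pow_add (A), mul_left_comm]

lemma zig_length {G : Type*} [Group G] (a b : G) (m : ℕ) : (zig a b m).length = 4 * m + 2 := by
  induction m with
  | zero => rfl
  | succ m ih => simp [zig, ih]; ring

lemma zig_map {G Q : Type*} [Group G] [Group Q] (π : G →* Q) (a b : G) (m : ℕ) :
    (zig a b m).map π = zig (π a) (π b) m := by
  induction m with
  | zero => simp [zig]
  | succ m ih => simp [zig, ih]

lemma blockR_map {G Q : Type*} [Group G] [Group Q] (π : G →* Q) (p : ℕ) (b s : G) :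
    (blockR p b s).map π = blockR p (π b) (π s) := by
  simp [blockR]

lemma Rows.zig {Q : Type*} [CommGroup Q] {A B : Q} {m : ℕ} (hA : A ^ (2 * m + 1) = 1) :
    Rows A B (zig A B m) 2 := by
  refine ⟨⟨(2 * m : ℕ), by rw [zig_prod, zpow_natCast]⟩, ?_⟩
  intro q j hj k
  obtain ⟨i, hi, hik⟩ := zpow_red A (2 * m + 1) (by omega) hA k
  rw [hik]
  exact zig_mem A B q m i j (by omega) hj

/-- The structural facts about a non-abelian group of order `p ^ 3` which are used. -/
structure Setup {G : Type*} [Group G] (p : ℕ) (a b : G) (Q : Type*) [CommGroup Q]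
    (π : G →* Q) : Prop where
  ker : ∀ g, π g = 1 ↔ g ∈ Subgroup.center G
  powQ : ∀ q : Q, q ^ p = 1
  gen : ∀ x : G, ∃ i j : ℤ, π x = π a ^ i * π b ^ j
  cen : ∀ g ∈ Subgroup.center G, g ≠ 1 → ∀ c ∈ Subgroup.center G, ∃ k : ℕ, c = g ^ k
  cenp : ∀ g ∈ Subgroup.center G, g ^ p = 1
  nc : a * b ≠ b * a

lemma exists_setup.{u} {G : Type u} [Group G] [Fintype G] (p : ℕ) (hp : p.Prime)
    (hcard : Fintype.card G = p ^ 3) (a b : G) (hab : a * b ≠ b * a) :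
    ∃ (Q : Type u) (_ : CommGroup Q) (π : G →* Q), Setup p a b Q π := by
  have hpf : Fact p.Prime := ⟨hp⟩
  have hcard' : Nat.card G = p ^ 3 := by rw [Nat.card_eq_fintype_card, hcard]
  have hncyc : ¬ IsCyclic (G ⧸ Subgroup.center G) := by
    intro h
    have := isMulCommutative_of_isCyclic_quotient_center_self G
    exact hab (this.is_comm.comm a b)
  obtain ⟨k, hk0, hk⟩ := IsPGroup.card_center_eq_prime_pow hcard' (by norm_num)
  have hmul := Subgroup.card_eq_card_quotient_mul_card_subgroup (Subgroup.center G)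
  have hk1 : k = 1 := by
    by_contra hne
    apply hncyc
    apply isCyclic_of_card_dvd_prime (p := p)
    obtain ⟨l, rfl⟩ : ∃ l, k = l + 2 := ⟨k - 2, by omega⟩
    rw [hcard', hk] at hmul
    have hpp := hp.pos
    have : p ^ 2 * (Nat.card (G ⧸ Subgroup.center G) * p ^ l) = p ^ 2 * p := by
      rw [← pow_succ, hmul]; ring
    exact ⟨_, (Nat.eq_of_mul_eq_mul_left (by positivity) this).symm⟩
  subst hk1
  rw [pow_one] at hk
  have hQ : Nat.card (G ⧸ Subgroup.center G) = p ^ 2 := by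
    rw [hcard', hk] at hmul
    exact (Nat.eq_of_mul_eq_mul_right hp.pos (by rw [← hmul]; ring))
  let I : CommGroup (G ⧸ Subgroup.center G) :=
    { (inferInstance : Group (G ⧸ Subgroup.center G)) with
      mul_comm := (IsPGroup.isMulCommutative_of_card_eq_prime_sq hQ).is_comm.comm }
  let π : G →* G ⧸ Subgroup.center G := QuotientGroup.mk' (Subgroup.center G)
  have hker : ∀ g, π g = 1 ↔ g ∈ Subgroup.center G := fun g => QuotientGroup.eq_one_iff g
  have hpow : ∀ q : G ⧸ Subgroup.center G, q ^ p = 1 := by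
    intro q
    have h := orderOf_dvd_natCard q
    rw [hQ] at h
    obtain ⟨i, hi, hi'⟩ := (Nat.dvd_prime_pow hp).1 h
    apply orderOf_dvd_iff_pow_eq_one.1
    rw [hi']
    have : i ≠ 2 := by
      rintro rfl
      exact hncyc (isCyclic_of_orderOf_eq_card q (by rw [hi', hQ]))
    exact (pow_dvd_pow p (show i ≤ 1 by omega)).trans (by simp)
  refine ⟨G ⧸ Subgroup.center G, I, π, hker, hpow, ?_, ?_, ?_, hab⟩
  · intro x
    suffices h : Subgroup.closure {π a, π b} = ⊤ by
      have : π x ∈ Subgroup.closure {π a, π b} := by rw [h]; trivial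
      obtain ⟨i, j, h⟩ := Subgroup.mem_closure_pair.1 this
      exact ⟨i, j, h.symm⟩
    have ha1 : π a ≠ 1 := by
      intro h
      exact hab ((Subgroup.mem_center_iff.1 ((hker a).1 h) b).symm)
    have hoa : orderOf (π a) = p := orderOf_eq_prime (hpow _) ha1
    have hle : Subgroup.zpowers (π a) ≤ Subgroup.closure {π a, π b} := by
      rw [Subgroup.zpowers_le]
      exact Subgroup.subset_closure (by simp)
    have hcd := Subgroup.card_subgroup_dvd_card (Subgroup.closure {π a, π b})
    rw [hQ] at hcd
    obtain ⟨i, hi, hi'⟩ := (Nat.dvd_prime_pow hp).1 hcd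
    have h2 : Nat.card (Subgroup.zpowers (π a)) = p := by rw [Nat.card_zpowers, hoa]
    have hi2 : i = 2 := by
      by_contra hne
      have hcle : Nat.card (Subgroup.closure {π a, π b}) ≤ Nat.card (Subgroup.zpowers (π a)) := by
        rw [hi', h2]
        calc p ^ i ≤ p ^ 1 := Nat.pow_le_pow_right hp.pos (by omega)
          _ = p := pow_one p
      have heq := Subgroup.eq_of_le_of_card_ge hle hcle
      have hb : π b ∈ Subgroup.zpowers (π a) := by
        rw [heq]; exact Subgroup.subset_closure (by simp)
      obtain ⟨n, hn⟩ := Subgroup.mem_zpowers_iff.1 hb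
      have hc : (a ^ n)⁻¹ * b ∈ Subgroup.center G := by
        rw [← hker, map_mul, map_inv, map_zpow, hn, inv_mul_cancel]
      have h3 := Subgroup.mem_center_iff.1 hc a
      apply hab
      have h4 : b = a ^ n * ((a ^ n)⁻¹ * b) := by simp
      have h5 : Commute a (a ^ n * ((a ^ n)⁻¹ * b)) :=
        ((Commute.refl a).zpow_right n).mul_right h3
      rw [← h4] at h5
      exact h5
    apply Subgroup.eq_top_of_card_eq
    rw [hi', hi2, hQ]
  · intro g hg hg1 c hc
    have := mem_powers_of_prime_card (g := (⟨g, hg⟩ : Subgroup.center G))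
      (g' := ⟨c, hc⟩) hk (by simpa [Subtype.ext_iff] using hg1)
    obtain ⟨k, hk⟩ := this
    exact ⟨k, by simpa [Subtype.ext_iff] using hk.symm⟩
  · intro g hg
    have : (⟨g, hg⟩ : Subgroup.center G) ^ p = 1 := by
      rw [← hk]; exact pow_card_eq_one'
    simpa [Subtype.ext_iff] using this

lemma Setup.inv_right {G : Type*} [Group G] {p : ℕ} {a b : G} {Q : Type*} [CommGroup Q]
    {π : G →* Q} (h : Setup p a b Q π) : Setup p a b⁻¹ Q π := by
  refine ⟨h.ker, h.powQ, fun x => ?_, h.cen, h.cenp, fun hc => ?_⟩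
  · obtain ⟨i, j, hij⟩ := h.gen x
    exact ⟨i, -j, by simp [hij]⟩
  · have h2 : Commute a b⁻¹ := hc
    exact h.nc (Commute.inv_right_iff.1 h2)

lemma Setup.central {G : Type*} [Group G] [Fintype G] {p : ℕ} {a b : G} {Q : Type*} [CommGroup Q]
    {π : G →* Q} (h : Setup p a b Q π) (hp : p.Prime) (hcard : Fintype.card G = p ^ 3)
    (S : Set G) (h1 : (1 : G) ∉ S) (L : List G) (hL : ∀ s ∈ L, s ∈ S)
    (hlen : L.length = p ^ 2) (hg : π L.prod = 1) (hg1 : L.prod ≠ 1)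
    (hcov : ∀ i j : ℤ, π a ^ i * π b ^ j ∈ pre (L.map π) 1) :
    p ≤ hamiltonCompression (cayleyGraph S) := by
  have hgc := (h.ker _).1 hg
  refine core p hp hcard S h1 L hL hlen (h.cenp _ hgc) ?_
  intro x
  obtain ⟨i, j, hx⟩ := h.gen x
  have h2 := hcov i j
  rw [← hx, ← map_one π, pre_map, List.mem_map] at h2
  obtain ⟨v, hv, hvx⟩ := h2
  have h3 : x * v⁻¹ ∈ Subgroup.center G := by
    rw [← h.ker, map_mul, map_inv, hvx, mul_inv_cancel]
  obtain ⟨k, hk⟩ := h.cen _ hgc hg1 _ h3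
  exact ⟨k, v, hv, by rw [← hk]; simp⟩

lemma Setup.central_rows {G : Type*} [Group G] [Fintype G] {p : ℕ} {a b : G} {Q : Type*}
    [CommGroup Q]
    {π : G →* Q} (h : Setup p a b Q π) (hp : p.Prime) (hcard : Fintype.card G = p ^ 3)
    (S : Set G) (h1 : (1 : G) ∉ S) (L : List G) (hL : ∀ s ∈ L, s ∈ S)
    (hlen : L.length = p ^ 2) (hg : π L.prod = 1) (hg1 : L.prod ≠ 1)
    (hcov : Rows (π a) (π b) (L.map π) p) :
    p ≤ hamiltonCompression (cayleyGraph S) := by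
  refine h.central hp hcard S h1 L hL hlen hg hg1 ?_
  intro i j
  obtain ⟨j', hj', hjj⟩ := zpow_red (π b) p hp.pos (h.powQ _) j
  have := hcov.2 1 j' hj' i
  rwa [one_mul, mul_comm, ← hjj] at this

lemma case_two {G : Type*} [Group G] [Fintype G] {a b : G} {Q : Type*}
    [CommGroup Q] {π : G →* Q} (h : Setup 2 a b Q π) (hcard : Fintype.card G = 2 ^ 3)
    (S : Set G) (h1 : (1 : G) ∉ S) (ha : a ∈ S) (hb : b ∈ S) (ha' : a⁻¹ ∈ S) (hb' : b⁻¹ ∈ S) :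
    2 ≤ hamiltonCompression (cayleyGraph S) := by
  refine h.central Nat.prime_two hcard S h1 [a, b, a⁻¹, b⁻¹] ?_ rfl ?_ ?_ ?_
  · simp [ha, hb, ha', hb']
  · simp only [List.prod_cons, List.prod_nil, mul_one, map_mul, map_inv]
    rw [mul_left_comm (π b), mul_inv_cancel, mul_one, mul_inv_cancel]
  · intro h2
    apply h.nc
    simp only [List.prod_cons, List.prod_nil, mul_one] at h2
    have h3 : a * b * (b * a)⁻¹ = 1 := by rw [mul_inv_rev, ← h2]; simp only [mul_assoc]
    exact mul_inv_eq_one.1 h3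
  · intro i j
    obtain ⟨i', hi', hii⟩ := zpow_red (π a) 2 (by norm_num) (h.powQ _) i
    obtain ⟨j', hj', hjj⟩ := zpow_red (π b) 2 (by norm_num) (h.powQ _) j
    rw [hii, hjj]
    interval_cases i' <;> interval_cases j' <;> simp [pre]

lemma case_big {G : Type*} [Group G] [Fintype G] {p : ℕ} {a b : G} {Q : Type*}
    [CommGroup Q] {π : G →* Q} (h : Setup p a b Q π) (hp : p.Prime)
    (hcard : Fintype.card G = p ^ 3) (n : ℕ) (hpn : p = 2 * n + 5)
    (S : Set G) (h1 : (1 : G) ∉ S) (ha : a ∈ S) (hb : b ∈ S) (ha' : a⁻¹ ∈ S) (hb' : b⁻¹ ∈ S) :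
    p ≤ hamiltonCompression (cayleyGraph S) := by
  have hpa : π a ^ p = 1 := h.powQ _
  have hpb : π b ^ p = 1 := h.powQ _
  -- the sequences of signs
  let tl : List G := (List.replicate n [a, a⁻¹]).flatten ++ [a⁻¹]
  let W : List G → List G := fun M => zig a b (n + 2) ++ ((M ++ tl).map (blockR p b)).flatten
  have htl : ∀ s ∈ tl, s = a ∨ s = a⁻¹ := by
    intro s hs
    simp only [tl, List.mem_append, List.mem_flatten, List.mem_singleton] at hs
    rcases hs with ⟨l, hl, hs⟩ | hs
    · rw [List.eq_of_mem_replicate hl] at hs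
      simpa using hs
    · exact Or.inr hs
  have hzS : ∀ m, ∀ s ∈ zig a b m, s ∈ S := by
    intro m
    induction m with
    | zero => simp [zig, hb]
    | succ m ih =>
      intro s hs
      simp only [zig, List.mem_append] at hs
      rcases hs with hs | hs
      · simp only [List.mem_cons, List.not_mem_nil, or_false] at hs
        rcases hs with rfl | rfl | rfl | rfl <;> assumption
      · exact ih s hs
  have hbl : ∀ s, (blockR p b s).length = p := by
    intro s
    have := hp.pos
    simp [blockR]; omega
  have hbp : ∀ s : G, π (blockR p b s).prod = π s⁻¹ * π b := by
    intro s
    have h2 : π s ^ (p - 1) = (π s)⁻¹ := by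
      rw [eq_inv_iff_mul_eq_one, ← pow_succ, Nat.sub_add_cancel hp.pos]; exact h.powQ _
    simp only [blockR, List.prod_append, List.prod_replicate, List.prod_singleton, map_mul,
      map_pow, map_inv, h2]
  have key : ∀ M : List G, (∀ s ∈ M, s = a ∨ s = a⁻¹) → M.length = 2 → M.prod = 1 →
      (W M).prod ≠ 1 → p ≤ hamiltonCompression (cayleyGraph S) := by
    intro M hM hMl hMp hne
    have hMt : ∀ s ∈ M ++ tl, s = a ∨ s = a⁻¹ := by
      intro s hs
      rcases List.mem_append.1 hs with hs | hs
      · exact hM s hs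
      · exact htl s hs
    have htll : (M ++ tl).length = 2 * n + 3 := by
      simp [tl, hMl]; ring
    have hprod : ∀ K : List G, π ((K.map (blockR p b)).flatten.prod)
        = (π K.prod)⁻¹ * π b ^ K.length := by
      intro K
      induction K with
      | nil => simp
      | cons s K ih =>
        rw [List.map_cons, List.flatten_cons, List.prod_append, map_mul, hbp, ih,
          List.prod_cons, map_mul, map_inv, List.length_cons, pow_succ', mul_inv,
          mul_mul_mul_comm]
    refine h.central_rows hp hcard S h1 (W M) ?_ ?_ ?_ hne ?_
    · intro s hs
      simp only [W, List.mem_append, List.mem_flatten, List.mem_map] at hs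
      rcases hs with hs | ⟨l, ⟨t, ht, rfl⟩, hs⟩
      · exact hzS _ _ hs
      · simp only [blockR, List.mem_append, List.mem_singleton] at hs
        rcases hs with hs | rfl
        · rw [List.eq_of_mem_replicate hs]
          rcases hMt t (List.mem_append.2 ht) with rfl | rfl <;> assumption
        · exact hb
    · simp only [W, List.length_append, zig_length, List.length_flatten, List.map_map]
      rw [show (List.length ∘ blockR p b) = fun _ => p from funext hbl]
      rw [List.map_const', List.sum_replicate, htll, smul_eq_mul, hpn]
      ring
    · have htp : (π (M ++ tl).prod) = (π a)⁻¹ := by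
        rw [List.prod_append, hMp, one_mul]
        have h3 : ((List.replicate n [a, a⁻¹]).flatten).prod = 1 := by
          rw [List.prod_flatten, List.map_replicate, List.prod_replicate]
          simp
        simp [tl, h3]
      simp only [W]
      rw [List.prod_append, map_mul, hprod, htp, htll, map_list_prod, zig_map, zig_prod, inv_inv]
      rw [mul_comm (π a) (π b ^ _), mul_mul_mul_comm, ← pow_add, ← pow_succ,
        show 2 + (2 * n + 3) = p by omega, hpb, one_mul,
        show 2 * (n + 2) + 1 = p by omega, hpa]
    · simp only [W]
      rw [List.map_append, zig_map, List.map_flatten, List.map_map]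
      have hz : Rows (π a) (π b) (zig (π a) (π b) (n + 2)) 2 := Rows.zig (by
        rw [show 2 * (n + 2) + 1 = p by omega, hpa])
      have hf : Rows (π a) (π b) ((M ++ tl).map (List.map π ∘ blockR p b)).flatten
          ((M ++ tl).map (List.map π ∘ blockR p b)).length := by
        apply Rows.flatten
        intro l hl
        obtain ⟨s, hs, rfl⟩ := List.mem_map.1 hl
        rw [Function.comp, blockR_map]
        apply Rows.blockR hp.pos hpa
        rcases hMt s hs with rfl | rfl <;> simp
      have := hz.append hf
      rw [List.length_map, htll, show 2 + (2 * n + 3) = p by omega] at this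
      exact this
  by_cases hA : (W [a, a⁻¹]).prod = 1
  · by_cases hB : (W [a⁻¹, a]).prod = 1
    · exfalso
      have heq := hA.trans hB.symm
      simp only [W, List.prod_append, List.map_append, List.flatten_append] at heq
      have heq2 := mul_right_cancel (mul_left_cancel heq)
      simp only [List.map_cons, List.map_nil, List.flatten_cons, List.flatten_nil,
        List.append_nil, blockR, List.prod_append, List.prod_replicate,
        List.prod_singleton, ← mul_assoc] at heq2
      have heq3 := mul_right_cancel heq2
      set x := a ^ (p - 1) with hx
      rw [inv_pow, ← hx] at heq3
      -- heq3 : x * b * x⁻¹ = x⁻¹ * b * x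
      have hc2 : Commute (x * x) b := by
        have := congrArg (fun t => x * t * x) heq3
        simp only [mul_assoc, mul_inv_cancel_left, inv_mul_cancel, mul_one] at this
        change x * x * b = b * (x * x)
        rw [mul_assoc]; exact this
      have hap : a ^ p ∈ Subgroup.center G := by rw [← h.ker, map_pow, hpa]
      have hcp : Commute (a ^ p) b := (Subgroup.mem_center_iff.1 hap b).symm
      have hxx : x * x = a ^ (2 * p - 2) := by
        rw [hx, ← pow_add]; congr 1; omega
      rw [hxx] at hc2
      have h6 : Commute (a ^ (2 * p)) b := by rw [mul_comm, pow_mul]; exact hcp.pow_left 2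
      have h7 : Commute (a ^ 2) b := by
        have : a ^ 2 = a ^ (2 * p) * (a ^ (2 * p - 2))⁻¹ := by
          rw [eq_mul_inv_iff_mul_eq, ← pow_add]; congr 1; omega
        rw [this]
        exact h6.mul_left hc2.inv_left
      have h8 : Commute a b := by
        have : a = a ^ p * ((a ^ 2) ^ (n + 2))⁻¹ := by
          rw [eq_mul_inv_iff_mul_eq, ← pow_mul, ← pow_succ']; congr 1; omega
        rw [this]
        exact hcp.mul_left (h7.pow_left _).inv_left
      exact h.nc h8
    · exact key [a⁻¹, a] (by simp) rfl (by simp) hB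
  · exact key [a, a⁻¹] (by simp) rfl (by simp) hA

lemma three_central {G : Type*} [Group G] [Fintype G] {a b : G} {Q : Type*}
    [CommGroup Q] {π : G →* Q} (h : Setup 3 a b Q π) (hcard : Fintype.card G = 3 ^ 3)
    (S : Set G) (h1 : (1 : G) ∉ S) (ha : a ∈ S) (hb : b ∈ S)
    (hne : (a * a * b) ^ 3 ≠ 1) :
    3 ≤ hamiltonCompression (cayleyGraph S) := by
  have hpr : ([a, a, b, a, a, b, a, a, b] : List G).prod = (a * a * b) ^ 3 := by
    simp [pow_succ, mul_assoc]
  refine h.central_rows Nat.prime_three hcard S h1 [a, a, b, a, a, b, a, a, b] ?_ rfl ?_ ?_ ?_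
  · simp [ha, hb]
  · rw [hpr, map_pow, h.powQ]
  · rwa [hpr]
  · have := Rows.flatten (A := π a) (B := π b)
      [blockR 3 (π b) (π a), blockR 3 (π b) (π a), blockR 3 (π b) (π a)] (by
        intro L hL
        have : L = blockR 3 (π b) (π a) := by simpa using hL
        rw [this]
        exact Rows.blockR (by norm_num) (h.powQ _) _ (Or.inl rfl))
    exact this

/-- Normal forms. -/
def nf {G : Type*} [Group G] (a b z : G) (x y t : ℕ) : G := a ^ x * b ^ y * z ^ t

lemma nf_mul_b {G : Type*} [Group G] {a b z : G} (hz : ∀ g, Commute z g) (x y t : ℕ) :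
    nf a b z x y t * b = nf a b z x (y + 1) t := by
  rw [nf, nf, mul_assoc, ((hz b).pow_left t).eq, ← mul_assoc, mul_assoc (a ^ x), ← pow_succ]

lemma nf_mul_a {G : Type*} [Group G] {a b z : G} (hz : ∀ g, Commute z g) (hba : b * a = a * b * z)
    (x y t : ℕ) : nf a b z x y t * a = nf a b z (x + 1) y (t + y) := by
  have hy : b ^ y * a = a * b ^ y * z ^ y := by
    induction y with
    | zero => simp
    | succ y ih =>
      calc b ^ (y + 1) * a = b ^ y * (b * a) := by rw [pow_succ, mul_assoc]
        _ = b ^ y * a * (b * z) := by rw [hba]; simp only [mul_assoc]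
        _ = a * b ^ y * (z ^ y * b) * z := by rw [ih]; simp only [mul_assoc]
        _ = a * b ^ y * (b * z ^ y) * z := by rw [((hz b).pow_left y).eq]
        _ = a * b ^ (y + 1) * z ^ (y + 1) := by rw [pow_succ b, pow_succ z]; simp only [mul_assoc]
  calc nf a b z x y t * a = a ^ x * b ^ y * (z ^ t * a) := by rw [nf, mul_assoc]
    _ = a ^ x * (b ^ y * a) * z ^ t := by
        rw [((hz a).pow_left t).eq]; simp only [mul_assoc]
    _ = (a ^ x * a) * b ^ y * (z ^ y * z ^ t) := by rw [hy]; simp only [mul_assoc]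
    _ = nf a b z (x + 1) y (t + y) := by rw [nf, ← pow_succ, ← pow_add, add_comm y t]

lemma nf_mul {G : Type*} [Group G] {a b z : G} (hz : ∀ g, Commute z g) (hba : b * a = a * b * z)
    (x y t x' y' t' : ℕ) : nf a b z x y t * nf a b z x' y' t' =
      nf a b z (x + x') (y + y') (t + t' + y * x') := by
  have h1 : ∀ x', nf a b z x y t * a ^ x' = nf a b z (x + x') y (t + y * x') := by
    intro x'
    induction x' with
    | zero => simp
    | succ k ih => rw [pow_succ, ← mul_assoc, ih, nf_mul_a hz hba]; congr 1; ring
  have h2 : ∀ y' x t, nf a b z x y t * b ^ y' = nf a b z x (y + y') t := by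
    intro y' x t
    induction y' with
    | zero => simp
    | succ k ih => rw [pow_succ, ← mul_assoc, ih, nf_mul_b hz]; rfl
  have h3 : nf a b z x y t * nf a b z x' y' t' =
      nf a b z x y t * a ^ x' * b ^ y' * z ^ t' := by
    simp only [nf, mul_assoc]
  rw [h3, h1, h2]
  simp only [nf]
  rw [mul_assoc _ _ (z ^ t'), ← pow_add]
  congr 2
  ring

lemma case_three {G : Type*} [Group G] [Fintype G] {a b : G} {Q : Type*}
    [CommGroup Q] {π : G →* Q} (h : Setup 3 a b Q π) (hcard : Fintype.card G = 3 ^ 3)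
    (S : Set G) (h1 : (1 : G) ∉ S) (ha : a ∈ S) (hb : b ∈ S) (hb' : b⁻¹ ∈ S) :
    3 ≤ hamiltonCompression (cayleyGraph S) := by
  by_cases hP : (a * a * b) ^ 3 = 1
  swap
  · exact three_central h hcard S h1 ha hb hP
  by_cases hM : (a * a * b⁻¹) ^ 3 = 1
  swap
  · exact three_central h.inv_right hcard S h1 ha hb' hM
  -- the commutator
  have comm : ∀ b : G, ∃ z : G, z ∈ Subgroup.center G ∧ b * a = a * b * z := by
    intro b
    refine ⟨b⁻¹ * a⁻¹ * b * a, ?_, by group⟩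
    rw [← h.ker]
    simp only [map_mul, map_inv]
    rw [mul_right_comm (π b)⁻¹, inv_mul_cancel, one_mul, inv_mul_cancel]
  have formula : ∀ b : G, (a * a * b) ^ 3 = a ^ 6 * b ^ 3 := by
    intro b
    obtain ⟨z, hzc, hba⟩ := comm b
    have hz : ∀ g, Commute z g := fun g => (Subgroup.mem_center_iff.1 hzc g).symm
    have h2 : a * a * b = nf a b z 2 1 0 := by simp [nf, sq]
    have hz3 := h.cenp z hzc
    rw [h2, pow_succ, sq, nf_mul hz hba, nf_mul hz hba]
    norm_num [nf]
    rw [show 6 = 3 * 2 by norm_num, pow_mul z, hz3, one_pow]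
  have e1 := formula b
  have e2 := formula b⁻¹
  rw [hP] at e1
  rw [hM, inv_pow] at e2
  have cube : ∀ x : G, (x ^ 3) ^ 3 = 1 := fun x => h.cenp _ (by rw [← h.ker, map_pow, h.powQ])
  have small : ∀ y : G, y ^ 3 = 1 → y ^ 2 = 1 → y = 1 := by
    intro y h3 h2
    rwa [pow_succ, h2, one_mul] at h3
  have hb3 : b ^ 3 = 1 := by
    apply small _ (cube b)
    have := e1.symm.trans e2
    have := mul_left_cancel this
    rw [sq]
    nth_rewrite 1 [this]
    simp
  have ha3 : a ^ 3 = 1 := by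
    apply small _ (cube a)
    rw [hb3, mul_one] at e1
    rw [← pow_mul]; exact e1.symm
  obtain ⟨z, hzc, hba⟩ := comm b
  have hz : ∀ g, Commute z g := fun g => (Subgroup.mem_center_iff.1 hzc g).symm
  have hz3 := h.cenp z hzc
  have hz1 : z ≠ 1 := by
    rintro rfl
    rw [mul_one] at hba
    exact h.nc hba.symm
  have pm : ∀ y : G, y ^ 3 = 1 → ∀ m n : ℕ, m % 3 = n % 3 → y ^ m = y ^ n := by
    intro y hy m n hmn
    exact pow_eq_pow_of_modEq hmn hy
  have nfm : ∀ x y t x' y' t' : ℕ, x % 3 = x' % 3 → y % 3 = y' % 3 → t % 3 = t' % 3 →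
      nf a b z x y t = nf a b z x' y' t' := by
    intro x y t x' y' t' hx hy ht
    rw [nf, nf, pm a ha3 _ _ hx, pm b hb3 _ _ hy, pm z hz3 _ _ ht]
  have hone : (1 : G) = nf a b z 0 0 0 := by simp [nf]
  let L : List G := [a, b, a, a, b, b, a, b, b]
  let T : List (ℕ × ℕ × ℕ) := [(0,0,0), (1,0,0), (1,1,0), (2,1,1), (3,1,2), (3,2,2), (3,3,2),
    (4,3,5), (4,4,5)]
  have hpre : pre L 1 = T.map (fun v => nf a b z v.1 v.2.1 v.2.2) := by
    rw [hone]
    simp only [L, T, pre, nf_mul_a hz hba, nf_mul_b hz, List.map_cons, List.map_nil]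
  have hprod : L.prod = nf a b z 4 5 5 := by
    have : L.prod = 1 * a * b * a * a * b * b * a * b * b := by simp [L, mul_assoc]
    rw [this, hone]
    simp only [nf_mul_a hz hba, nf_mul_b hz]
  let P : List (ℕ × ℕ × ℕ) := [(0,0,0), (4,5,5), (8,10,30)]
  have hpow2 : L.prod ^ 2 = nf a b z 8 10 30 := by
    rw [sq, hprod, nf_mul hz hba]
  have hpow3 : L.prod ^ 3 = 1 := by
    rw [pow_succ, hpow2, hprod, nf_mul hz hba, hone]
    exact nfm _ _ _ _ _ _ rfl rfl rfl
  have hP : ∀ w ∈ P, ∃ k : ℕ, L.prod ^ k = nf a b z w.1 w.2.1 w.2.2 := by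
    intro w hw
    simp only [P, List.mem_cons, List.not_mem_nil, or_false] at hw
    rcases hw with rfl | rfl | rfl
    · exact ⟨0, by rw [pow_zero, hone]⟩
    · exact ⟨1, by rw [pow_one, hprod]⟩
    · exact ⟨2, hpow2⟩
  have table : ∀ i < 3, ∀ j < 3, ∀ k < 3, ∃ w ∈ P, ∃ v ∈ T,
      i % 3 = (w.1 + v.1) % 3 ∧ j % 3 = (w.2.1 + v.2.1) % 3 ∧
      k % 3 = (w.2.2 + v.2.2 + w.2.1 * v.1) % 3 := by
    decide
  have hnf : ∀ x : G, ∃ i < 3, ∃ j < 3, ∃ k < 3, x = nf a b z i j k := by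
    intro x
    obtain ⟨i, j, hx⟩ := h.gen x
    obtain ⟨i', hi', hii⟩ := zpow_red (π a) 3 (by norm_num) (h.powQ _) i
    obtain ⟨j', hj', hjj⟩ := zpow_red (π b) 3 (by norm_num) (h.powQ _) j
    have hc : (a ^ i' * b ^ j')⁻¹ * x ∈ Subgroup.center G := by
      rw [← h.ker]
      simp only [map_mul, map_inv, map_pow]
      rw [hx, hii, hjj, inv_mul_cancel]
    obtain ⟨k, hk⟩ := h.cen z hzc hz1 _ hc
    refine ⟨i', hi', j', hj', k % 3, Nat.mod_lt _ (by norm_num), ?_⟩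
    rw [nf, pm z hz3 (k % 3) k (Nat.mod_mod _ _), ← hk, mul_inv_cancel_left]
  refine core 3 Nat.prime_three hcard S h1 L (by simp [L, ha, hb]) rfl hpow3 ?_
  intro x
  obtain ⟨i, hi, j, hj, k, hk, rfl⟩ := hnf x
  obtain ⟨w, hw, v, hv, e1, e2, e3⟩ := table i hi j hj k hk
  obtain ⟨r, hr⟩ := hP w hw
  refine ⟨r, nf a b z v.1 v.2.1 v.2.2, ?_, ?_⟩
  · rw [hpre]
    exact List.mem_map.2 ⟨v, hv, rfl⟩
  · rw [hr, nf_mul hz hba]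
    exact nfm _ _ _ _ _ _ e1 e2 e3

/-- If `G` is a non-abelian group of order `p³` (`p` prime) and
`S` a symmetric generating set with `1 ∉ S`, then `κ(Cay(G,S)) ≥ p`. -/
theorem stmt13 {G : Type*} [Group G] [Fintype G] (p : ℕ) (hp : p.Prime)
    (hcard : Fintype.card G = p ^ 3) (hnonab : ∃ a b : G, a * b ≠ b * a)
    (S : Set G) (hsymm : S⁻¹ = S) (h1 : (1 : G) ∉ S)
    (hgen : Subgroup.closure S = ⊤) :
    p ≤ hamiltonCompression (cayleyGraph S) := by
  have hS : ∃ a ∈ S, ∃ b ∈ S, a * b ≠ b * a := by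
    by_contra! hcon
    obtain ⟨a, b, hab⟩ := hnonab
    have hc1 : Subgroup.closure S ≤ Subgroup.centralizer S := by
      rw [Subgroup.closure_le]
      intro x hx
      rw [SetLike.mem_coe, Subgroup.mem_centralizer_iff]
      exact fun y hy => hcon y hy x hx
    have hc2 : Subgroup.closure S ≤ Subgroup.centralizer (Set.univ : Set G) := by
      rw [Subgroup.closure_le]
      intro x hx
      rw [SetLike.mem_coe, Subgroup.mem_centralizer_iff]
      intro y _
      have hy : y ∈ Subgroup.centralizer S := hc1 (by rw [hgen]; trivial)
      exact (Subgroup.mem_centralizer_iff.1 hy x hx).symm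
    have ha : b ∈ Subgroup.centralizer (Set.univ : Set G) := hc2 (by rw [hgen]; trivial)
    exact hab (Subgroup.mem_centralizer_iff.1 ha a trivial)
  obtain ⟨a, ha, b, hb, hab⟩ := hS
  have hinv : ∀ x ∈ S, x⁻¹ ∈ S := by
    intro x hx
    rw [← hsymm]
    simpa using hx
  obtain ⟨Q, _, π, h⟩ := exists_setup p hp hcard a b hab
  rcases hp.eq_two_or_odd with rfl | hodd
  · exact case_two h hcard S h1 ha hb (hinv a ha) (hinv b hb)
  · by_cases h3 : p = 3
    · subst h3
      exact case_three h hcard S h1 ha hb (hinv b hb)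
    · have := hp.two_le
      exact case_big h hp hcard ((p - 5) / 2) (by omega) S h1 ha hb (hinv a ha) (hinv b hb)
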